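/- arXiv:1707.02278 — 2 statements merged into one kernel-verified Lean document; each statement's English description precedes it below -/
import Mathlib

section
/- Let f : ℝ^N → (−∞,∞] be proper and closed with inf f > −∞. For each k ∈ ℕ let h_k : ℝ^N → ℝ be convex and differentiable, let m_k : ℝ^N → (−∞,∞] be proper, closed and convex with |f(x) − m_k(x)| ≤ ω(‖x − x^k‖) for all x ∈ ℝ^N, where ω is a continuous growth function, and suppose x̂^k is a global minimizer of m_k + D_{h_k}(·, x^k). Suppose: (i) (x^k) and (ŷ^k) are bounded sequences in ℝ^N; (ii) m_k(ŷ^k) + D_{h_k}(ŷ^k, x^k) ≤ m_k(x̂^k) + D_{h_k}(x̂^k, x^k) + ε_k with ε_k → 0; (iii) Δ_k := m_k(ŷ^k) + D_{h_k}(ŷ^k, x^k) − f(x^k) → 0; and (iv) for all bounded sequences (u^k), (v^k) in ℝ^N, u^k − v^k → 0 if and only if D_{h_k}(u^k, v^k) → 0. Then f(x^k) − f(ŷ^k) → 0 and f(x̂^k) − f(x^k) → 0 as k → ∞. -/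
open scoped RealInnerProductSpace
open Filter Topology

/-- The Bregman distance `D_h(x, u) = h x − h u − ⟨∇h u, x − u⟩` associated with `h`. -/
noncomputable def breg {N : ℕ} (h : EuclideanSpace ℝ (Fin N) → ℝ)
    (x u : EuclideanSpace ℝ (Fin N)) : ℝ :=
  h x - h u - ⟪gradient h u, x - u⟫

/-- Convexity for extended-real-valued functions. -/
def ERealConvex {N : ℕ} (f : EuclideanSpace ℝ (Fin N) → EReal) : Prop :=
  ∀ x y : EuclideanSpace ℝ (Fin N), ∀ a b : ℝ, 0 ≤ a → 0 ≤ b → a + b = 1 →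
    f (a • x + b • y) ≤ (a : EReal) * f x + (b : EReal) * f y

theorem aux_deriv (g : ℝ → ℝ) (g' A : ℝ) (hg : HasDerivAt g g' 0)
    (H : ∀ t : ℝ, 0 < t → t ≤ 1 → 0 ≤ t * A + g t - g 0) : 0 ≤ A + g' := by
  have h1 : Tendsto (fun t : ℝ => t⁻¹ • (g (0 + t) - g 0)) (𝓝[>] 0) (𝓝 g') :=
    (hasDerivAt_iff_tendsto_slope_zero.mp hg).mono_left
      (nhdsWithin_mono _ (fun t ht => ne_of_gt ht))
  have h2 := h1.const_add A
  refine ge_of_tendsto h2 ?_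
  have h3 : ∀ᶠ t : ℝ in 𝓝[>] 0, t ∈ Set.Ioc (0:ℝ) 1 := Ioc_mem_nhdsGT one_pos
  filter_upwards [h3] with t ht
  have := H t ht.1 ht.2
  have ht0 : t ≠ 0 := ne_of_gt ht.1
  rw [zero_add, smul_eq_mul]
  have e : A + t⁻¹ * (g t - g 0) = t⁻¹ * (t * A + g t - g 0) := by
    field_simp
    ring
  rw [e]
  exact mul_nonneg (inv_nonneg.mpr ht.1.le) this

theorem aux_line {N : ℕ} (h : EuclideanSpace ℝ (Fin N) → ℝ) (hd : Differentiable ℝ h)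
    (u d : EuclideanSpace ℝ (Fin N)) :
    HasDerivAt (fun t : ℝ => h (u + t • d)) ⟪gradient h u, d⟫ 0 := by
  have h1 : HasFDerivAt h (InnerProductSpace.toDual ℝ _ (gradient h u)) (u + (0:ℝ) • d) := by
    rw [zero_smul, add_zero]
    exact (hd u).hasGradientAt.hasFDerivAt
  have h2 : HasDerivAt (fun t : ℝ => u + t • d) d 0 := by
    simpa using ((hasDerivAt_id (0:ℝ)).smul_const d).const_add u
  exact h1.comp_hasDerivAt (0:ℝ) h2

theorem breg_nonneg' {N : ℕ} (h : EuclideanSpace ℝ (Fin N) → ℝ) (hc : ConvexOn ℝ Set.univ h)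
    (hd : Differentiable ℝ h) (y u : EuclideanSpace ℝ (Fin N)) : 0 ≤ breg h y u := by
  have := aux_deriv (fun t : ℝ => - h (u + t • (y - u))) _ (h y - h u)
    (aux_line h hd u (y - u)).neg (by
      intro t h0 h1
      have := hc.2 (Set.mem_univ u) (Set.mem_univ y) (sub_nonneg.mpr h1) h0.le (by ring)
      have e : (1 - t) • u + t • y = u + t • (y - u) := by module
      rw [e] at this
      simp only [smul_eq_mul, zero_smul, add_zero] at this ⊢
      linarith)
  unfold breg
  linarith

theorem breg_trunc {N : ℕ} (h : EuclideanSpace ℝ (Fin N) → ℝ) (hc : ConvexOn ℝ Set.univ h)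
    (hd : Differentiable ℝ h) (y d : EuclideanSpace ℝ (Fin N)) (s : ℝ) (hs0 : 0 ≤ s)
    (hs1 : s ≤ 1) : breg h y (y + s • d) ≤ breg h y (y + d) := by
  have a1 := breg_nonneg' h hc hd (y + s • d) (y + d)
  have a2 := breg_nonneg' h hc hd (y + d) (y + s • d)
  unfold breg at *
  have e1 : y + s • d - (y + d) = (s - 1) • d := by module
  have e2 : y + d - (y + s • d) = (1 - s) • d := by module
  have e3 : y - (y + s • d) = (-s) • d := by module
  have e4 : y - (y + d) = (-1 : ℝ) • d := by module
  rw [e1] at a1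
  rw [e2] at a2
  rw [e3, e4]
  simp only [inner_smul_right] at *
  set p := ⟪gradient h (y + s • d), d⟫
  set q := ⟪gradient h (y + d), d⟫
  rcases eq_or_lt_of_le hs1 with r | r
  · have : p = q := by simp only [p, q, r, one_smul]
    rw [r, one_smul, this]
  · have hpq : p ≤ q := by
      by_contra hcon
      push Not at hcon
      nlinarith
    nlinarith

theorem aux_close {N : ℕ} (h : ℕ → EuclideanSpace ℝ (Fin N) → ℝ)
    (hhconv : ∀ k, ConvexOn ℝ Set.univ (h k)) (hhdiff : ∀ k, Differentiable ℝ (h k))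
    (hbregcont : ∀ u v : ℕ → EuclideanSpace ℝ (Fin N),
      (∃ C, ∀ k, ‖u k‖ ≤ C) → (∃ C, ∀ k, ‖v k‖ ≤ C) →
      (Tendsto (fun k => u k - v k) atTop (𝓝 0) ↔
        Tendsto (fun k => breg (h k) (u k) (v k)) atTop (𝓝 0)))
    (u v : ℕ → EuclideanSpace ℝ (Fin N)) (hu : ∃ C, ∀ k, ‖u k‖ ≤ C)
    (hD : Tendsto (fun k => breg (h k) (u k) (v k)) atTop (𝓝 0)) :
    Tendsto (fun k => v k - u k) atTop (𝓝 0) := by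
  let s : ℕ → ℝ := fun k => (max 1 ‖v k - u k‖)⁻¹
  have hm1 : ∀ k, 1 ≤ max 1 ‖v k - u k‖ := fun k => le_max_left _ _
  have hs0 : ∀ k, 0 ≤ s k := fun k => inv_nonneg.mpr (zero_le_one.trans (hm1 k))
  have hs1 : ∀ k, s k ≤ 1 := fun k => inv_le_one_of_one_le₀ (hm1 k)
  have hn : ∀ k, ‖s k • (v k - u k)‖ ≤ 1 := fun k => by
    rw [norm_smul, Real.norm_of_nonneg (hs0 k)]
    have hp : 0 < max 1 ‖v k - u k‖ := zero_lt_one.trans_le (hm1 k)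
    rw [inv_mul_le_iff₀ hp, mul_one]
    exact le_max_right _ _
  have hw : Tendsto (fun k => breg (h k) (u k) (u k + s k • (v k - u k))) atTop (𝓝 0) := by
    refine squeeze_zero (fun k => breg_nonneg' _ (hhconv k) (hhdiff k) _ _) (fun k => ?_) hD
    have := breg_trunc (h k) (hhconv k) (hhdiff k) (u k) (v k - u k) (s k) (hs0 k) (hs1 k)
    rwa [add_sub_cancel] at this
  have hwb : ∃ C, ∀ k, ‖u k + s k • (v k - u k)‖ ≤ C := by
    obtain ⟨C, hC⟩ := hu
    exact ⟨C + 1, fun k => (norm_add_le _ _).trans (add_le_add (hC k) (hn k))⟩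
  have h1 := ((hbregcont u _ hu hwb).mpr hw).neg
  have h2 : Tendsto (fun k => s k • (v k - u k)) atTop (𝓝 0) := by
    simpa using h1
  refine h2.congr' ?_
  have h3 : ∀ᶠ k in atTop, ‖s k • (v k - u k)‖ < 1 := by
    have := h2.norm
    rw [norm_zero] at this
    exact this.eventually (gt_mem_nhds one_pos)
  filter_upwards [h3] with k hk
  rcases le_total ‖v k - u k‖ 1 with r | r
  · simp only [s, max_eq_left r, inv_one, one_smul]
  · exfalso
    rw [norm_smul, Real.norm_of_nonneg (hs0 k)] at hk
    simp only [s, max_eq_right r] at hk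
    rw [inv_mul_cancel₀ (by linarith)] at hk
    exact lt_irrefl _ hk

theorem three_point {N : ℕ} (h : EuclideanSpace ℝ (Fin N) → ℝ) (hd : Differentiable ℝ h)
    (m : EuclideanSpace ℝ (Fin N) → EReal) (hm : ERealConvex m)
    (x xh u : EuclideanSpace ℝ (Fin N)) (a b : ℝ) (ha : m xh = (a : EReal))
    (hb : m u = (b : EReal))
    (hmin : ∀ u, m xh + ((breg h xh x : ℝ) : EReal) ≤ m u + ((breg h u x : ℝ) : EReal)) :
    a + breg h xh x + breg h u xh ≤ b + breg h u x := by
  have := aux_deriv (fun t : ℝ => h (xh + t • (u - xh))) _ (b - a - ⟪gradient h x, u - xh⟫)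
    (aux_line h hd xh (u - xh)) (by
      intro t h0 h1
      have c1 := hm xh u (1 - t) t (sub_nonneg.mpr h1) h0.le (by ring)
      have e : (1 - t) • xh + t • u = xh + t • (u - xh) := by module
      rw [e, ha, hb] at c1
      have c2 := (hmin (xh + t • (u - xh))).trans (add_le_add_left c1 _)
      rw [ha] at c2
      have c3 : a + breg h xh x ≤ (1 - t) * a + t * b + breg h (xh + t • (u - xh)) x := by
        exact_mod_cast c2
      unfold breg at c3
      have e2 : xh + t • (u - xh) - x = (xh - x) + t • (u - xh) := by abel
      rw [e2, inner_add_right, inner_smul_right] at c3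
      simp only [zero_smul, add_zero]
      linarith)
  unfold breg
  have e3 : u - x = (u - xh) + (xh - x) := by abel
  rw [e3, inner_add_right]
  linarith

theorem aux_lift (p q : EReal) (w : ℝ) (a : ℝ) (hp : p = (a : EReal)) (hq : q ≠ ⊥)
    (h1 : p - q ≤ (w : EReal)) (h2 : q - p ≤ (w : EReal)) :
    ∃ b : ℝ, q = (b : EReal) ∧ |b - a| ≤ w := by
  subst hp
  induction q using EReal.rec with
  | bot => exact absurd rfl hq
  | top =>
    rw [EReal.top_sub_coe] at h2
    exact absurd (top_le_iff.mp h2) (EReal.coe_ne_top w)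
  | coe b =>
    refine ⟨b, rfl, ?_⟩
    have h1' : a - b ≤ w := by exact_mod_cast h1
    have h2' : b - a ≤ w := by exact_mod_cast h2
    exact abs_le.mpr ⟨by linarith, h2'⟩

theorem aux_fin (p q : EReal) (d D : ℝ) (hp : p ≠ ⊥) (hq : q ≠ ⊥)
    (h : (D : EReal) = p + (d : EReal) - q) :
    ∃ a b : ℝ, p = (a : EReal) ∧ q = (b : EReal) ∧ D = a + d - b := by
  induction p using EReal.rec with
  | bot => exact absurd rfl hp
  | top =>
    induction q using EReal.rec with
    | bot => exact absurd rfl hq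
    | top => simp at h
    | coe b => simp at h
  | coe a =>
    induction q using EReal.rec with
    | bot => exact absurd rfl hq
    | top =>
      rw [EReal.sub_top] at h
      exact absurd h (EReal.coe_ne_bot D)
    | coe b => exact ⟨a, b, rfl, rfl, by exact_mod_cast h⟩

/-- **Vanishing objective value gaps along the iterates.** -/
theorem objective_gaps_vanish (N : ℕ)
    (f : EuclideanSpace ℝ (Fin N) → EReal)
    (hfbot : ∀ z, f z ≠ ⊥) (hfproper : ∃ z, f z ≠ ⊤)
    (hfclosed : LowerSemicontinuous f) (hfinf : ⊥ < ⨅ z, f z)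
    (x yh xh : ℕ → EuclideanSpace ℝ (Fin N))
    (h : ℕ → EuclideanSpace ℝ (Fin N) → ℝ)
    (hhconv : ∀ k, ConvexOn ℝ Set.univ (h k)) (hhdiff : ∀ k, Differentiable ℝ (h k))
    (m : ℕ → EuclideanSpace ℝ (Fin N) → EReal)
    (hmbot : ∀ k z, m k z ≠ ⊥) (hmproper : ∀ k, ∃ z, m k z ≠ ⊤)
    (hmclosed : ∀ k, LowerSemicontinuous (m k)) (hmconv : ∀ k, ERealConvex (m k))
    (ω : ℝ → ℝ) (hω0 : ω 0 = 0) (hωnn : ∀ t, 0 ≤ t → 0 ≤ ω t)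
    (hωcont : ContinuousOn ω (Set.Ici 0))
    (hωgrowth : Tendsto (fun t => ω t / t) (𝓝[>] (0:ℝ)) (𝓝 0))
    (hmodel : ∀ k z, f z - m k z ≤ ((ω ‖z - x k‖ : ℝ) : EReal) ∧
                     m k z - f z ≤ ((ω ‖z - x k‖ : ℝ) : EReal))
    (hmin : ∀ k u, m k (xh k) + ((breg (h k) (xh k) (x k) : ℝ) : EReal) ≤
                   m k u + ((breg (h k) u (x k) : ℝ) : EReal))
    -- (i) boundedness
    (hxbdd : ∃ C, ∀ k, ‖x k‖ ≤ C) (hybdd : ∃ C, ∀ k, ‖yh k‖ ≤ C)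
    -- (ii) inexactness vanishes
    (ε : ℕ → ℝ) (hε : Tendsto ε atTop (𝓝 0))
    (hinexact : ∀ k, m k (yh k) + ((breg (h k) (yh k) (x k) : ℝ) : EReal) ≤
      m k (xh k) + ((breg (h k) (xh k) (x k) : ℝ) : EReal) + ((ε k : ℝ) : EReal))
    -- (iii) model improvement vanishes
    (Δ : ℕ → ℝ)
    (hΔdef : ∀ k, ((Δ k : ℝ) : EReal) =
      m k (yh k) + ((breg (h k) (yh k) (x k) : ℝ) : EReal) - f (x k))
    (hΔ : Tendsto Δ atTop (𝓝 0))
    -- (iv) Bregman continuity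
    (hbregcont : ∀ u v : ℕ → EuclideanSpace ℝ (Fin N),
      (∃ C, ∀ k, ‖u k‖ ≤ C) → (∃ C, ∀ k, ‖v k‖ ≤ C) →
      (Tendsto (fun k => u k - v k) atTop (𝓝 0) ↔
        Tendsto (fun k => breg (h k) (u k) (v k)) atTop (𝓝 0))) :
    Tendsto (fun k => f (x k) - f (yh k)) atTop (𝓝 (0 : EReal)) ∧
    Tendsto (fun k => f (xh k) - f (x k)) atTop (𝓝 (0 : EReal)) := by
  have H : ∀ k, ∃ my fx mx fy fxh : ℝ, m k (yh k) = (my : EReal) ∧ f (x k) = (fx : EReal) ∧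
      m k (xh k) = (mx : EReal) ∧ f (yh k) = (fy : EReal) ∧ f (xh k) = (fxh : EReal) ∧
      m k (x k) = (fx : EReal) ∧
      Δ k = my + breg (h k) (yh k) (x k) - fx ∧
      |fy - my| ≤ ω ‖yh k - x k‖ ∧ |fxh - mx| ≤ ω ‖xh k - x k‖ := by
    intro k
    obtain ⟨my, fx, h1, h2, h3⟩ := aux_fin _ _ _ _ (hmbot k (yh k)) (hfbot (x k)) (hΔdef k)
    obtain ⟨fy, h4, h5⟩ := aux_lift _ _ _ my h1 (hfbot (yh k)) (hmodel k (yh k)).2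
      (hmodel k (yh k)).1
    obtain ⟨b, h6, h7⟩ := aux_lift _ _ _ fx h2 (hmbot k (x k)) (hmodel k (x k)).1
      (hmodel k (x k)).2
    rw [sub_self, norm_zero, hω0] at h7
    have h8 : b = fx := sub_eq_zero.mp (abs_nonpos_iff.mp h7)
    have h9 := hmin k (yh k)
    rw [h1] at h9
    have h10 : m k (xh k) ≠ ⊤ := by
      intro hc
      rw [hc, EReal.top_add_coe, ← EReal.coe_add] at h9
      exact absurd (top_le_iff.mp h9) (EReal.coe_ne_top _)
    have h11 := (EReal.coe_toReal h10 (hmbot k (xh k))).symm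
    obtain ⟨fxh, h12, h13⟩ := aux_lift _ _ _ _ h11 (hfbot (xh k)) (hmodel k (xh k)).2
      (hmodel k (xh k)).1
    exact ⟨my, fx, _, fy, fxh, h1, h2, h11, h4, h12, h8 ▸ h6, h3, h5, h13⟩
  choose my fx mx fy fxh hmy hfx hmx hfy hfxh hmxk hΔ' hy' hx' using H
  have hin : ∀ k, my k + breg (h k) (yh k) (x k) ≤ mx k + breg (h k) (xh k) (x k) + ε k := by
    intro k
    have := hinexact k
    rw [hmy, hmx] at this
    exact_mod_cast this
  have t1 : ∀ k, breg (h k) (x k) (xh k) ≤ ε k - Δ k := by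
    intro k
    have := three_point (h k) (hhdiff k) (m k) (hmconv k) (x k) (xh k) (x k) _ _ (hmx k)
      (hmxk k) (hmin k)
    have e : breg (h k) (x k) (x k) = 0 := by simp [breg]
    linarith [hin k, hΔ' k]
  have t2 : ∀ k, breg (h k) (yh k) (xh k) ≤ ε k := by
    intro k
    have := three_point (h k) (hhdiff k) (m k) (hmconv k) (x k) (xh k) (yh k) _ _ (hmx k)
      (hmy k) (hmin k)
    linarith [hin k]
  have c1 : Tendsto (fun k => xh k - x k) atTop (𝓝 0) := by
    refine aux_close h hhconv hhdiff hbregcont x xh hxbdd ?_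
    refine squeeze_zero (fun k => breg_nonneg' _ (hhconv k) (hhdiff k) _ _) t1 ?_
    simpa using hε.sub hΔ
  have c2 : Tendsto (fun k => xh k - yh k) atTop (𝓝 0) :=
    aux_close h hhconv hhdiff hbregcont yh xh hybdd
      (squeeze_zero (fun k => breg_nonneg' _ (hhconv k) (hhdiff k) _ _) t2 hε)
  have c3 : Tendsto (fun k => yh k - x k) atTop (𝓝 0) := by
    simpa using c1.sub c2
  have hxhb : ∃ C, ∀ k, ‖xh k‖ ≤ C := by
    obtain ⟨C, hC⟩ := hxbdd
    obtain ⟨C', hC'⟩ := (Metric.isBounded_range_of_tendsto _ c1).exists_norm_le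
    refine ⟨C' + C, fun k => ?_⟩
    have e : xh k = (xh k - x k) + x k := by abel
    rw [e]
    exact (norm_add_le _ _).trans (add_le_add (hC' _ ⟨k, rfl⟩) (hC k))
  have d1 := (hbregcont xh x hxhb hxbdd).mp c1
  have d2 := (hbregcont yh x hybdd hxbdd).mp c3
  have hωt : ∀ z : ℕ → EuclideanSpace ℝ (Fin N), Tendsto z atTop (𝓝 0) →
      Tendsto (fun k => ω ‖z k‖) atTop (𝓝 0) := by
    intro z hz
    have a1 : Tendsto ω (𝓝[Set.Ici 0] 0) (𝓝 (ω 0)) := hωcont 0 Set.self_mem_Ici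
    rw [hω0] at a1
    refine a1.comp (tendsto_nhdsWithin_iff.mpr ⟨?_, Eventually.of_forall fun k => norm_nonneg _⟩)
    simpa using hz.norm
  have w1 : Tendsto (fun k => fy k - my k) atTop (𝓝 0) :=
    squeeze_zero_norm hy' (hωt _ c3)
  have w2 : Tendsto (fun k => fxh k - mx k) atTop (𝓝 0) :=
    squeeze_zero_norm hx' (hωt _ c1)
  constructor
  · have r : Tendsto (fun k => fx k - fy k) atTop (𝓝 0) := by
      have := (d2.sub hΔ).sub w1
      simp only [sub_zero] at this
      refine this.congr fun k => ?_
      rw [hΔ' k]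
      ring
    have := (continuous_coe_real_ereal.tendsto 0).comp r
    refine this.congr fun k => ?_
    simp [hfx, hfy]
  · have g : Tendsto (fun k => mx k + breg (h k) (xh k) (x k) - fx k) atTop (𝓝 0) := by
      have l : Tendsto (fun k => Δ k - ε k) atTop (𝓝 0) := by simpa using hΔ.sub hε
      refine tendsto_of_tendsto_of_tendsto_of_le_of_le l hΔ (fun k => ?_) (fun k => ?_)
      · simp only
        linarith [hin k, hΔ' k]
      · have := hmin k (yh k)
        rw [hmy, hmx] at this
        have : mx k + breg (h k) (xh k) (x k) ≤ my k + breg (h k) (yh k) (x k) := by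
          exact_mod_cast this
        simp only
        linarith [hΔ' k]
    have r : Tendsto (fun k => fxh k - fx k) atTop (𝓝 0) := by
      have := (w2.add g).sub d1
      simp only [sub_zero, add_zero] at this
      refine this.congr fun k => ?_
      ring
    have := (continuous_coe_real_ereal.tendsto 0).comp r
    refine this.congr fun k => ?_
    simp [hfx, hfxh]
end

section
/- Let f : ℝ^N → (−∞,∞], x̄ ∈ dom f, let h : ℝ^N → ℝ be convex and differentiable, and let m : ℝ^N → (−∞,∞] satisfy the global model error bound |f(x) − m(x)| ≤ L·D_h(x, x̄) for all x ∈ ℝ^N, where L > 0. Let α > 0 and suppose ŷ ∈ ℝ^N satisfies m(ŷ) + (1/α)·D_h(ŷ, x̄) ≤ f(x̄) (i.e. Δ(ŷ, x̄) ≤ 0). Then the descent estimate ((1 − αL)/α)·D_h(ŷ, x̄) ≤ f(x̄) − f(ŷ) holds; in particular, for α ∈ (0, 1/L) the left-hand side is nonnegative, and strictly positive whenever D_h(ŷ, x̄) > 0. -/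
open scoped RealInnerProductSpace
open Filter Topology

theorem breg_nonneg_aux {N : ℕ} (h : EuclideanSpace ℝ (Fin N) → ℝ)
    (hc : ConvexOn ℝ Set.univ h) (hd : Differentiable ℝ h)
    (x u : EuclideanSpace ℝ (Fin N)) : 0 ≤ breg h x u := by
  have h1 : ConvexOn ℝ Set.univ (h ∘ (AffineMap.lineMap u x : ℝ →ᵃ[ℝ] _)) := by
    simpa using hc.comp_affineMap (AffineMap.lineMap u x : ℝ →ᵃ[ℝ] _)
  have h2 : HasDerivAt (h ∘ (AffineMap.lineMap u x : ℝ →ᵃ[ℝ] _)) (⟪gradient h u, x - u⟫) (0 : ℝ) := by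
    have h3 : HasFDerivAt h (InnerProductSpace.toDual ℝ _ (gradient h u))
        ((AffineMap.lineMap u x : ℝ →ᵃ[ℝ] _) (0 : ℝ)) := by
      simpa using (hd u).hasGradientAt.hasFDerivAt
    have h4 := h3.comp_hasDerivAt (0 : ℝ) (AffineMap.hasDerivAt_lineMap (a := u) (b := x))
    simpa using h4
  have h5 := h1.le_slope_of_hasDerivAt (Set.mem_univ 0) (Set.mem_univ 1) one_pos h2
  simp only [slope_def_field, Function.comp_apply, AffineMap.lineMap_apply_one, AffineMap.lineMap_apply_zero, sub_zero, div_one] at h5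
  unfold breg
  linarith

/-- **Descent property under a global model error bound (inexact points).** If
`|f − m| ≤ L·D_h(·, x̄)` and `ŷ` satisfies `m ŷ + (1/α)·D_h(ŷ, x̄) ≤ f x̄`, then
`((1 − αL)/α)·D_h(ŷ, x̄) ≤ f x̄ − f ŷ`; in particular the left-hand side is nonnegative
for `α ∈ (0, 1/L)`, and strictly positive whenever `D_h(ŷ, x̄) > 0`. -/
theorem descent_property_global_model (N : ℕ)
    (f : EuclideanSpace ℝ (Fin N) → EReal) (hfbot : ∀ z, f z ≠ ⊥)
    (xb : EuclideanSpace ℝ (Fin N)) (hxb : f xb ≠ ⊤)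
    (h : EuclideanSpace ℝ (Fin N) → ℝ)
    (hhconv : ConvexOn ℝ Set.univ h) (hhdiff : Differentiable ℝ h)
    (m : EuclideanSpace ℝ (Fin N) → EReal) (hmbot : ∀ z, m z ≠ ⊥)
    (L : ℝ) (hL : 0 < L)
    (hmodel : ∀ z, f z - m z ≤ ((L * breg h z xb : ℝ) : EReal) ∧
                   m z - f z ≤ ((L * breg h z xb : ℝ) : EReal))
    (α : ℝ) (hα : 0 < α)
    (yh : EuclideanSpace ℝ (Fin N))
    (hdecrease : m yh + (((1/α) * breg h yh xb : ℝ) : EReal) ≤ f xb) :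
    ((((1 - α * L) / α) * breg h yh xb : ℝ) : EReal) ≤ f xb - f yh ∧
      (α < 1 / L →
        0 ≤ ((1 - α * L) / α) * breg h yh xb ∧
        (0 < breg h yh xb → 0 < ((1 - α * L) / α) * breg h yh xb)) := by
  have hb : 0 ≤ breg h yh xb := breg_nonneg_aux h hhconv hhdiff yh xb
  refine ⟨?_, fun hlt => ?_⟩
  · have h1 := (hmodel yh).1
    have hx := hfbot xb
    have hy := hfbot yh
    have hm := hmbot yh
    generalize breg h yh xb = d at *
    generalize f xb = a at *
    generalize f yh = b at *
    generalize m yh = c at *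
    induction a using EReal.rec with
    | bot => exact absurd rfl hx
    | top => exact absurd rfl hxb
    | coe a =>
    induction c using EReal.rec with
    | bot => exact absurd rfl hm
    | top =>
      rw [EReal.top_add_coe, top_le_iff] at hdecrease
      exact absurd hdecrease hxb
    | coe c =>
    induction b using EReal.rec with
    | bot => exact absurd rfl hy
    | top =>
      rw [EReal.top_sub_coe, top_le_iff] at h1
      exact absurd h1 (EReal.coe_ne_top _)
    | coe b =>
    norm_cast at *
    have e : (1 - α * L) / α * d = 1 / α * d - L * d := by
      field_simp
    rw [e]
    linarith
  · have hp : 0 < (1 - α * L) / α := by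
      rw [lt_div_iff₀ hL] at hlt
      exact div_pos (by linarith) hα
    exact ⟨mul_nonneg hp.le hb, fun hd => mul_pos hp hd⟩
end
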